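/- Let V be a real Hilbert space and a : V × V → ℝ a bounded bilinear form. Suppose there is β > 0 such that for every v ∈ V both β‖v‖ ≤ sup{ a(v, w)/‖w‖ : w ∈ V, w ≠ 0 } and β‖v‖ ≤ sup{ a(w, v)/‖w‖ : w ∈ V, w ≠ 0 } hold. Then for every continuous linear functional g on V there exists a unique u ∈ V with a(u, v) = g(v) for all v ∈ V, and this solution satisfies ‖u‖ ≤ β⁻¹‖g‖, where ‖g‖ is the dual norm of g. -/

import Mathlib

/-!
Regard `B : U × V → 𝕜` as the operator `u ↦ B u` from `U` to the dual of `V`, so that the supremum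
in the first inf-sup condition is the norm of `B u`: the operator is bounded below, hence injective
with closed range. If its range were not dense, Hahn–Banach would give a nonzero functional on the
dual of `V` vanishing on it; by reflexivity this functional is evaluation at some `v ≠ 0`, and then
`B u v = 0` for all `u`, which the second inf-sup condition excludes.
-/

open NormedSpace

theorem sSup_apply_div_norm_le_norm {V : Type*} [SeminormedAddCommGroup V] [NormedSpace ℝ V]
    (f : V →L[ℝ] ℝ) : sSup {x : ℝ | ∃ w : V, w ≠ 0 ∧ x = f w / ‖w‖} ≤ ‖f‖ := by
  refine Real.sSup_le ?_ (norm_nonneg f)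
  rintro _ ⟨w, -, rfl⟩
  exact div_le_of_le_mul₀ (norm_nonneg w) (norm_nonneg f)
    ((Real.le_norm_self _).trans (f.le_opNorm w))

theorem injective_of_infSup {U V : Type*} [NormedAddCommGroup U] [NormedSpace ℝ U]
    [SeminormedAddCommGroup V] [NormedSpace ℝ V] {B : U →L[ℝ] StrongDual ℝ V} {β : ℝ} (hβ : 0 < β)
    (h : ∀ u : U, β * ‖u‖ ≤ sSup {x : ℝ | ∃ w : V, w ≠ 0 ∧ x = B u w / ‖w‖}) :
    Function.Injective B := by
  have bounded_below (u : U) : β * ‖u‖ ≤ ‖B u‖ :=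
    (h u).trans (sSup_apply_div_norm_le_norm (B u))
  obtain ⟨_, antilipschitz⟩ := antilipschitzWith_iff_exists_mul_le_norm.2 ⟨β, hβ, bounded_below⟩
  exact antilipschitz.injective

theorem inclusionInDoubleDual_surjective (𝕜 E : Type*) [RCLike 𝕜] [NormedAddCommGroup E]
    [InnerProductSpace 𝕜 E] [CompleteSpace E] :
    Function.Surjective (inclusionInDoubleDual 𝕜 E) := by
  intro Φ
  let φ : StrongDual 𝕜 E := (starL 𝕜 : 𝕜 ≃L⋆[𝕜] 𝕜).toContinuousLinearMap.comp
    (Φ.comp (InnerProductSpace.toDual 𝕜 E).toContinuousLinearEquiv.toContinuousLinearMap)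
  refine ⟨(InnerProductSpace.toDual 𝕜 E).symm φ, ContinuousLinearMap.ext fun f ↦ ?_⟩
  obtain ⟨x, rfl⟩ := (InnerProductSpace.toDual 𝕜 E).surjective f
  rw [dual_def, InnerProductSpace.toDual_apply_apply, ← inner_conj_symm,
    InnerProductSpace.toDual_symm_apply]
  exact star_star (Φ _)

section RCLike

variable {𝕜 : Type*} [RCLike 𝕜]

theorem topologicalClosure_eq_top_of_forall_dual {E : Type*} [SeminormedAddCommGroup E]
    [NormedSpace 𝕜 E] (p : Submodule 𝕜 E)
    (h : ∀ f : StrongDual 𝕜 E, (∀ x ∈ p, f x = 0) → f = 0) : p.topologicalClosure = ⊤ := by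
  have : IsClosed (p.topologicalClosure : Set E) := p.isClosed_topologicalClosure
  refine Submodule.eq_top_iff'.2 fun x ↦ (Submodule.Quotient.mk_eq_zero _).1 ?_
  refine SeparatingDual.eq_zero_of_forall_dual_eq_zero (R := 𝕜) fun f ↦ ?_
  have vanishes_on_p : ∀ y ∈ p, f.comp p.topologicalClosure.mkQL y = 0 := fun y hy ↦ by
    have : p.topologicalClosure.mkQ y = 0 :=
      (Submodule.Quotient.mk_eq_zero _).2 (p.le_topologicalClosure hy)
    simp [this]
  exact DFunLike.congr_fun (h _ vanishes_on_p) x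

theorem topologicalClosure_range_eq_top_of_flip_injective {U V : Type*}
    [SeminormedAddCommGroup U] [NormedSpace 𝕜 U] [SeminormedAddCommGroup V] [NormedSpace 𝕜 V]
    (reflexive : Function.Surjective (inclusionInDoubleDual 𝕜 V))
    {B : U →L[𝕜] StrongDual 𝕜 V} (hB : Function.Injective B.flip) :
    B.range.topologicalClosure = ⊤ := by
  refine topologicalClosure_eq_top_of_forall_dual _ fun Φ hΦ ↦ ?_
  obtain ⟨v, rfl⟩ := reflexive Φ
  have flip_eq_zero : B.flip v = 0 := ContinuousLinearMap.ext fun u ↦ hΦ (B u) ⟨u, rfl⟩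
  rw [(map_eq_zero_iff B.flip hB).1 flip_eq_zero, map_zero]

theorem infSup_wellPosed_general {U V : Type*} [NormedAddCommGroup U] [NormedSpace 𝕜 U]
    [CompleteSpace U] [NormedAddCommGroup V] [NormedSpace 𝕜 V]
    (reflexive : Function.Surjective (inclusionInDoubleDual 𝕜 V))
    (B : U →L[𝕜] StrongDual 𝕜 V) {β : ℝ} (hβ : 0 < β) (bounded_below : ∀ u, β * ‖u‖ ≤ ‖B u‖)
    (flip_injective : Function.Injective B.flip) (g : StrongDual 𝕜 V) :
    (∃! u : U, ∀ v : V, B u v = g v) ∧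
      ∀ u : U, (∀ v : V, B u v = g v) → ‖u‖ ≤ β⁻¹ * ‖g‖ := by
  simp only [← DFunLike.ext_iff]
  have bijective : Function.Bijective B :=
    B.bijective_iff_dense_range_and_antilipschitz.2
      ⟨topologicalClosure_range_eq_top_of_flip_injective reflexive flip_injective,
        antilipschitzWith_iff_exists_mul_le_norm.2 ⟨β, hβ, bounded_below⟩⟩
  refine ⟨bijective.existsUnique g, ?_⟩
  rintro u rfl
  exact (le_inv_mul_iff₀ hβ).2 (bounded_below u)

end RCLike

/-- If a bounded bilinear form `a` on a real Hilbert space `V` satisfies the two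
inf-sup conditions with constant `β > 0`, then for every continuous linear functional
`g` on `V` there is a unique `u ∈ V` with `a(u, v) = g(v)` for all `v`, and any such
solution satisfies the stability bound `‖u‖ ≤ β⁻¹ ‖g‖`. -/
theorem infSup_wellPosed
    {V : Type*} [NormedAddCommGroup V] [InnerProductSpace ℝ V] [CompleteSpace V]
    (a : V →ₗ[ℝ] V →ₗ[ℝ] ℝ) (M : ℝ) (hM : 0 ≤ M)
    (hbound : ∀ v w, |a v w| ≤ M * ‖v‖ * ‖w‖)
    (β : ℝ) (hβ : 0 < β)
    (hinfsup₁ : ∀ v : V, β * ‖v‖ ≤ sSup {x : ℝ | ∃ w : V, w ≠ 0 ∧ x = a v w / ‖w‖})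
    (hinfsup₂ : ∀ v : V, β * ‖v‖ ≤ sSup {x : ℝ | ∃ w : V, w ≠ 0 ∧ x = a w v / ‖w‖}) :
    ∀ g : V →L[ℝ] ℝ,
      (∃! u : V, ∀ v : V, a u v = g v) ∧
      (∀ u : V, (∀ v : V, a u v = g v) → ‖u‖ ≤ β⁻¹ * ‖g‖) := by
  let B : V →L[ℝ] StrongDual ℝ V := a.mkContinuous₂ M hbound
  exact infSup_wellPosed_general (inclusionInDoubleDual_surjective ℝ V) B hβ
    (fun v ↦ (hinfsup₁ v).trans (sSup_apply_div_norm_le_norm (B v)))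
    (injective_of_infSup hβ hinfsup₂)
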